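/- Let F be a field of characteristic not 2, m,n ≥ 3, and let M be the generic m×n matrix over R = F[x_{ij}]. Primes of type (1), generated by all entries outside one row, have height (m-1)n; primes of type (2), generated by all entries outside one column, have height m(n-1); primes of type (3), generated by one 2×2 subpermanent and all entries outside its 2×2 block, have height mn-3. In particular, for (m,n) ≠ (3,3) not all minimal primes of P_2(M) have the same height, so R/P_2(M) is not equidimensional. -/

import Mathlib

open MvPolynomial

/-!
Modulo the variables outside a set of positions, the ring `R[x_{ij}]` retracts onto the polynomial
ring in the remaining variables. Thus the ideals of all three types are contractions of principal
prime ideals (zero, or generated by the generic `2 × 2` permanent), and their heights are squeezed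
between Krull's height theorem and the chain obtained by adding one generator at a time.

For minimality, the key is a `2 × 3` block: if a prime without `2` contains its three
subpermanents, it contains the product of the two entries in one row and the remaining entry of the
other row. Hence the entries which a prime above `P₂(M)` omits force the others to lie in it.
-/

open Matrix

section Retraction

variable {R σ τ : Type*} [CommRing R] {e : σ → τ}

theorem sub_rename_killCompl_mem (he : Function.Injective e) (p : MvPolynomial τ R) :
    p - rename e (killCompl he p) ∈ Ideal.span (X '' (Set.range e)ᶜ) := by
  induction p using MvPolynomial.induction_on with
  | C a => simp [algebraMap_eq]
  | add p q hp hq =>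
    rw [map_add, map_add, add_sub_add_comm]
    exact Ideal.add_mem _ hp hq
  | mul_X p t hp =>
    by_cases ht : t ∈ Set.range e
    · obtain ⟨s, rfl⟩ := ht
      have hX : killCompl he (X (e s) : MvPolynomial τ R) = X s := by
        rw [← rename_X, killCompl_rename_app]
      rw [map_mul, hX, map_mul, rename_X, ← sub_mul]
      exact Ideal.mul_mem_right _ _ hp
    · have hX : killCompl he (X t : MvPolynomial τ R) = 0 := by
        rw [killCompl, aeval_X, dif_neg ht]
      rw [map_mul, hX, mul_zero, map_zero, sub_zero]
      exact Ideal.mul_mem_left _ _ (Ideal.subset_span ⟨t, ht, rfl⟩)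

theorem comap_killCompl (he : Function.Injective e) (I : Ideal (MvPolynomial σ R)) :
    I.comap (killCompl he) = I.map (rename e) ⊔ Ideal.span (X '' (Set.range e)ᶜ) := by
  refine le_antisymm (fun p hp => ?_) (sup_le ?_ ?_)
  · rw [← add_sub_cancel (rename e (killCompl he p)) p]
    exact Submodule.add_mem_sup (Ideal.mem_map_of_mem _ hp) (sub_rename_killCompl_mem he p)
  · rw [Ideal.map_le_iff_le_comap]
    intro p hp
    simpa using hp
  · rw [Ideal.span_le]
    rintro _ ⟨t, ht, rfl⟩
    rw [SetLike.mem_coe, Ideal.mem_comap, killCompl, aeval_X, dif_neg ht]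
    exact I.zero_mem

theorem comap_killCompl_bot (he : Function.Injective e) :
    (⊥ : Ideal (MvPolynomial σ R)).comap (killCompl he) =
      Ideal.span (X '' (Set.range e)ᶜ) := by
  rw [comap_killCompl, Ideal.map_bot, bot_sup_eq]

theorem comap_killCompl_span_singleton (he : Function.Injective e) (g : MvPolynomial σ R) :
    (Ideal.span {g}).comap (killCompl he) =
      Ideal.span ({rename e g} ∪ X '' (Set.range e)ᶜ) := by
  rw [comap_killCompl, Ideal.map_span, Set.image_singleton, Ideal.span_union]

end Retraction

section VariableIdeals

variable {R σ : Type*} [CommRing R]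

theorem X_mem_span_X_image [Nontrivial R] {S : Set σ} {s : σ} :
    (X s : MvPolynomial σ R) ∈ Ideal.span (X '' S) ↔ s ∈ S := by
  classical
  simp [mem_ideal_span_X_image, support_X, Finsupp.single_apply]

theorem C_mem_span_X_image {S : Set σ} {a : R} :
    (C a : MvPolynomial σ R) ∈ Ideal.span (X '' S) ↔ a = 0 := by
  classical
  rw [mem_ideal_span_X_image, ← monomial_zero', support_monomial]
  by_cases ha : a = 0 <;> simp [ha]

theorem isPrime_span_X_image [IsDomain R] (S : Set σ) :
    (Ideal.span (X '' S : Set (MvPolynomial σ R))).IsPrime := by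
  have h := comap_killCompl_bot (R := R) (Subtype.val_injective (p := (· ∈ Sᶜ)))
  rw [Subtype.range_coe_subtype, Set.ofPred_mem_eq, compl_compl] at h
  rw [← h]
  infer_instance

theorem encard_le_height_span_X_image [IsDomain R] {S : Set σ} (hS : S.Finite) :
    S.encard ≤ (Ideal.span (X '' S : Set (MvPolynomial σ R))).height := by
  induction S, hS using Set.Finite.induction_on with
  | empty => simp
  | @insert s S hs _ ih =>
    have := isPrime_span_X_image (R := R) S
    have := isPrime_span_X_image (R := R) (insert s S)
    have hlt : Ideal.span (X '' S : Set (MvPolynomial σ R)) < Ideal.span (X '' insert s S) := by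
      refine (Ideal.span_mono (Set.image_mono (Set.subset_insert s S))).lt_of_not_ge fun h => hs ?_
      exact X_mem_span_X_image.1 (h (X_mem_span_X_image.2 (Set.mem_insert s S)))
    rw [Set.encard_insert_of_notMem hs]
    exact (add_le_add_left ih 1).trans (Ideal.height_add_one_le_of_lt_of_isPrime hlt)

variable [IsDomain R] [IsNoetherianRing R] [Finite σ]

theorem height_span_X_image (S : Set σ) :
    (Ideal.span (X '' S : Set (MvPolynomial σ R))).height = S.encard := by
  refine le_antisymm ?_ (encard_le_height_span_X_image S.toFinite)
  calc (Ideal.span (X '' S : Set (MvPolynomial σ R))).height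
      ≤ (Ideal.span (X '' S : Set (MvPolynomial σ R))).spanFinrank :=
        Ideal.height_le_spanFinrank _ (isPrime_span_X_image S).ne_top
    _ ≤ (X '' S : Set (MvPolynomial σ R)).encard := Submodule.spanFinrank_span_le_encard _
    _ ≤ S.encard := Set.encard_image_le _ _

theorem height_comap_killCompl_span_singleton {τ : Type*} {e : τ → σ}
    (he : Function.Injective e) {g : MvPolynomial τ R} (hg : Prime g) :
    ((Ideal.span {g}).comap (killCompl he)).height = (Set.range e)ᶜ.encard + 1 := by
  have hprime : (Ideal.span {g}).IsPrime := (Ideal.span_singleton_prime hg.ne_zero).2 hg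
  apply le_antisymm
  · have hne : (Ideal.span {g}).comap (killCompl he) ≠ ⊤ := Ideal.IsPrime.ne_top inferInstance
    rw [comap_killCompl_span_singleton] at hne ⊢
    calc (Ideal.span ({rename e g} ∪ X '' (Set.range e)ᶜ)).height
        ≤ (Ideal.span ({rename e g} ∪ X '' (Set.range e)ᶜ)).spanFinrank :=
          Ideal.height_le_spanFinrank _ hne
      _ ≤ ({rename e g} ∪ X '' (Set.range e)ᶜ).encard := Submodule.spanFinrank_span_le_encard _
      _ ≤ (X '' (Set.range e)ᶜ).encard + 1 := by
          rw [Set.singleton_union]; exact Set.encard_insert_le _ _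
      _ ≤ (Set.range e)ᶜ.encard + 1 := by gcongr; exact Set.encard_image_le _ _
  · have hlt : (⊥ : Ideal (MvPolynomial τ R)).comap (killCompl he) <
        (Ideal.span {g}).comap (killCompl he) := by
      refine (Ideal.comap_mono bot_le).lt_of_not_ge fun h => hg.ne_zero ?_
      have hmem : rename e g ∈ (Ideal.span {g}).comap (killCompl he) := by
        simp
      simpa using h hmem
    rw [← height_span_X_image (R := R), ← comap_killCompl_bot he]
    exact Ideal.height_add_one_le_of_lt_of_isPrime hlt

end VariableIdeals

section Permanent

theorem permanent_fin_two {A : Type*} [CommSemiring A] (M : Matrix (Fin 2) (Fin 2) A) :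
    M.permanent = M 0 0 * M 1 1 + M 1 0 * M 0 1 := by
  have huniv : (Finset.univ : Finset (Equiv.Perm (Fin 2))) = {1, Equiv.swap 0 1} := by decide
  rw [permanent, huniv, Finset.sum_pair (by decide)]
  simp

variable {R : Type*} [CommRing R]

theorem prime_permanent_mvPolynomialX_fin_two [IsDomain R] [UniqueFactorizationMonoid R] :
    Prime (mvPolynomialX (Fin 2) (Fin 2) R).permanent := by
  have hrel : IsRelPrime (X (0, 0)) (X (1, 0) * X (0, 1) : MvPolynomial (Fin 2 × Fin 2) R) := by
    rw [(X_prime (R := R)).irreducible.isRelPrime_iff_not_dvd]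
    exact fun h => (X_prime.dvd_or_dvd h).elim (by simp [X_dvd_X]) (by simp [X_dvd_X])
  rw [permanent_fin_two]
  refine (irreducible_mul_X_add _ _ _ (X_ne_zero _) (by simp [vars_X]) (fun h => ?_) hrel).prime
  simpa [vars_X] using vars_mul _ _ h

theorem span_permanent_le_ker_eval :
    Ideal.span {(mvPolynomialX (Fin 2) (Fin 2) R).permanent} ≤
      RingHom.ker (eval fun s => !![1, 1; -1, 1] s.1 s.2) := by
  rw [Ideal.span_singleton_le_iff_mem, RingHom.mem_ker, permanent_fin_two]
  simp

theorem X_notMem_span_permanent [Nontrivial R] (s : Fin 2 × Fin 2) :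
    X s ∉ Ideal.span {(mvPolynomialX (Fin 2) (Fin 2) R).permanent} := by
  intro hs
  have h0 : !![1, 1; -1, 1] s.1 s.2 = (0 : R) := by
    simpa using span_permanent_le_ker_eval hs
  fin_cases s <;> simp at h0

theorem two_notMem_span_permanent (h2 : (2 : R) ≠ 0) :
    2 ∉ Ideal.span {(mvPolynomialX (Fin 2) (Fin 2) R).permanent} :=
  fun h => h2 (by simpa using span_permanent_le_ker_eval h)

end Permanent

section Subpermanents

variable {A ι κ : Type*} [CommRing A] [LinearOrder ι] [LinearOrder κ]

/-- The ideal `P₂(M)` generated by the `2 × 2` subpermanents of a matrix `M`; the rows and columns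
of a subpermanent are listed in increasing order. -/
def subpermanentIdeal (M : Matrix ι κ A) : Ideal A :=
  Ideal.span {f | ∃ (i k : ι) (j l : κ), i < k ∧ j < l ∧ f = M i j * M k l + M k j * M i l}

variable {M : Matrix ι κ A} {I : Ideal A}

theorem subpermanentIdeal_le_iff : subpermanentIdeal M ≤ I ↔
    ∀ ⦃i k⦄ ⦃j l⦄, i ≠ k → j ≠ l → M i j * M k l + M k j * M i l ∈ I := by
  refine ⟨fun h i k j l hik hjl => h ?_, fun h => Ideal.span_le.2 ?_⟩
  · rcases hik.lt_or_gt with hi | hi <;> rcases hjl.lt_or_gt with hj | hj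
    · exact Ideal.subset_span ⟨i, k, j, l, hi, hj, rfl⟩
    · exact Ideal.subset_span ⟨i, k, l, j, hi, hj, by ring⟩
    · exact Ideal.subset_span ⟨k, i, j, l, hi, hj, by ring⟩
    · exact Ideal.subset_span ⟨k, i, l, j, hi, hj, by ring⟩
  · rintro _ ⟨i, k, j, l, hik, hjl, rfl⟩
    exact h hik.ne hjl.ne

theorem subpermanentIdeal_transpose_le_iff :
    subpermanentIdeal Mᵀ ≤ I ↔ subpermanentIdeal M ≤ I := by
  simp only [subpermanentIdeal_le_iff, transpose_apply]
  constructor <;> intro h _ _ _ _ hik hjl <;>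
    · convert h hjl hik using 2
      exact mul_comm _ _

theorem mul_add_mul_mem {a b c d : A} (hab : a ∈ I ∨ b ∈ I) (hcd : c ∈ I ∨ d ∈ I) :
    a * b + c * d ∈ I :=
  I.add_mem (hab.elim (I.mul_mem_right b) (I.mul_mem_left a))
    (hcd.elim (I.mul_mem_right d) (I.mul_mem_left c))

theorem subpermanentIdeal_le_of_mem_or_mem
    (h : ∀ ⦃i k⦄ ⦃j l⦄, i ≠ k → j ≠ l → M i j ∈ I ∨ M k l ∈ I) : subpermanentIdeal M ≤ I :=
  subpermanentIdeal_le_iff.2 fun _ _ _ _ hik hjl =>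
    mul_add_mul_mem (h hik hjl) (h hik.symm hjl)

variable {p : Ideal A} [hp : p.IsPrime]

theorem entry_mem_of_row_notMem (h2 : 2 ∉ p) (hM : subpermanentIdeal M ≤ p) {i k : ι} {j j' l : κ}
    (hik : i ≠ k) (hjj' : j ≠ j') (hlj : l ≠ j) (hlj' : l ≠ j')
    (hj : M i j ∉ p) (hj' : M i j' ∉ p) : M k l ∈ p := by
  rw [subpermanentIdeal_le_iff] at hM
  have hmem : 2 * (M i j * M i j' * M k l) ∈ p := by
    have hcomb : 2 * (M i j * M i j' * M k l) =
        M i j' * (M i l * M k j + M k l * M i j) + M i j * (M i l * M k j' + M k l * M i j') -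
          M i l * (M i j * M k j' + M k j * M i j') := by ring
    rw [hcomb]
    exact p.sub_mem (p.add_mem (p.mul_mem_left _ (hM hik hlj)) (p.mul_mem_left _ (hM hik hlj')))
      (p.mul_mem_left _ (hM hik hjj'))
  have hnot : M i j * M i j' ∉ p := hp.mul_notMem hj hj'
  exact (hp.mem_or_mem ((hp.mem_or_mem hmem).resolve_left h2)).resolve_left hnot

theorem entry_mem_of_column_notMem (h2 : 2 ∉ p) (hM : subpermanentIdeal M ≤ p) {i i' k : ι}
    {j l : κ} (hjl : j ≠ l) (hii' : i ≠ i') (hki : k ≠ i) (hki' : k ≠ i')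
    (hi : M i j ∉ p) (hi' : M i' j ∉ p) : M k l ∈ p :=
  entry_mem_of_row_notMem (M := Mᵀ) h2 (subpermanentIdeal_transpose_le_iff.2 hM)
    hjl hii' hki hki' hi hi'

theorem entry_mem_of_block_notMem (h2 : 2 ∉ p) (hM : subpermanentIdeal M ≤ p) {i k : ι} {j l : κ}
    (hik : i ≠ k) (hjl : j ≠ l)
    (hblock : ∀ a b, (a = i ∨ a = k) ∧ (b = j ∨ b = l) → M a b ∉ p) {a : ι} {b : κ}
    (hab : ¬ ((a = i ∨ a = k) ∧ (b = j ∨ b = l))) : M a b ∈ p := by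
  have hij := hblock i j (by simp)
  have hil := hblock i l (by simp)
  have hkj := hblock k j (by simp)
  have hkl := hblock k l (by simp)
  by_cases hb : b = j ∨ b = l
  · obtain ⟨hai, hak⟩ : a ≠ i ∧ a ≠ k := by tauto
    rcases hb with rfl | rfl
    · exact entry_mem_of_column_notMem h2 hM hjl.symm hik hai hak hil hkl
    · exact entry_mem_of_column_notMem h2 hM hjl hik hai hak hij hkj
  · obtain ⟨hbj, hbl⟩ : b ≠ j ∧ b ≠ l := by tauto
    by_cases hai : a = i
    · subst hai
      exact entry_mem_of_row_notMem h2 hM hik.symm hjl hbj hbl hkj hkl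
    · exact entry_mem_of_row_notMem h2 hM (Ne.symm hai) hjl hbj hbl hij hil

end Subpermanents

section PrimesOfGenericMatrix

variable (R : Type*) {ι κ : Type*} [CommRing R]

/-- The ideals of type (1): all entries of the generic matrix outside row `i₀`. -/
noncomputable def rowIdeal (i₀ : ι) : Ideal (MvPolynomial (ι × κ) R) :=
  Ideal.span {f | ∃ (i : ι) (j : κ), i ≠ i₀ ∧ f = X (i, j)}

/-- The ideals of type (2): all entries of the generic matrix outside column `j₀`. -/
noncomputable def columnIdeal (j₀ : κ) : Ideal (MvPolynomial (ι × κ) R) :=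
  Ideal.span {f | ∃ (i : ι) (j : κ), j ≠ j₀ ∧ f = X (i, j)}

/-- The ideals of type (3): the subpermanent of the block with rows `i`, `k` and columns `j`, `l`,
and all entries of the generic matrix outside that block. -/
noncomputable def blockIdeal (i k : ι) (j l : κ) : Ideal (MvPolynomial (ι × κ) R) :=
  Ideal.span ({X (i, j) * X (k, l) + X (k, j) * X (i, l)} ∪
    {f | ∃ (p : ι) (q : κ), ¬ ((p = i ∨ p = k) ∧ (q = j ∨ q = l)) ∧ f = X (p, q)})

variable {R}

theorem rowIdeal_eq_span_X_image (i₀ : ι) :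
    rowIdeal R i₀ = Ideal.span (X '' ({i₀}ᶜ ×ˢ (Set.univ : Set κ))) := by
  rw [rowIdeal]
  congr 1; ext f; simp [eq_comm]

theorem columnIdeal_eq_span_X_image (j₀ : κ) :
    columnIdeal R j₀ = Ideal.span (X '' ((Set.univ : Set ι) ×ˢ {j₀}ᶜ)) := by
  rw [columnIdeal]
  congr 1; ext f; simp [eq_comm]

theorem X_mem_rowIdeal [Nontrivial R] {i₀ i : ι} {j : κ} :
    X (i, j) ∈ rowIdeal R i₀ ↔ i ≠ i₀ := by
  simp [rowIdeal_eq_span_X_image, X_mem_span_X_image]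

theorem X_mem_columnIdeal [Nontrivial R] {j₀ j : κ} {i : ι} :
    X (i, j) ∈ columnIdeal R j₀ ↔ j ≠ j₀ := by
  simp [columnIdeal_eq_span_X_image, X_mem_span_X_image]

theorem two_notMem_rowIdeal (h2 : (2 : R) ≠ 0) (i₀ : ι) : 2 ∉ rowIdeal (κ := κ) R i₀ := by
  rwa [rowIdeal_eq_span_X_image, ← map_ofNat C 2, C_mem_span_X_image]

theorem two_notMem_columnIdeal (h2 : (2 : R) ≠ 0) (j₀ : κ) :
    2 ∉ columnIdeal (ι := ι) R j₀ := by
  rwa [columnIdeal_eq_span_X_image, ← map_ofNat C 2, C_mem_span_X_image]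

section Embedding

variable {i k : ι} {j l : κ}

theorem injective_prodMap_vecCons (hik : i ≠ k) (hjl : j ≠ l) :
    Function.Injective (Prod.map ![i, k] ![j, l]) :=
  .prodMap (by simpa [Function.Injective, Fin.forall_fin_two] using ⟨hik, hik.symm⟩)
    (by simpa [Function.Injective, Fin.forall_fin_two] using ⟨hjl, hjl.symm⟩)

theorem range_prodMap_vecCons :
    Set.range (Prod.map ![i, k] ![j, l]) = {s | (s.1 = i ∨ s.1 = k) ∧ (s.2 = j ∨ s.2 = l)} := by
  ext; simp [Set.range_prodMap, or_comm]

theorem blockIdeal_eq_comap_killCompl (hik : i ≠ k) (hjl : j ≠ l) :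
    blockIdeal R i k j l =
      (Ideal.span {(mvPolynomialX (Fin 2) (Fin 2) R).permanent}).comap
        (killCompl (injective_prodMap_vecCons hik hjl)) := by
  rw [comap_killCompl_span_singleton, range_prodMap_vecCons, blockIdeal, permanent_fin_two]
  congr 2
  · simp
  · ext f; simp [eq_comm]

theorem X_notMem_blockIdeal [Nontrivial R] (hik : i ≠ k) (hjl : j ≠ l) {a : ι} {b : κ}
    (hab : (a = i ∨ a = k) ∧ (b = j ∨ b = l)) : X (a, b) ∉ blockIdeal R i k j l := by
  obtain ⟨s, hs⟩ : (a, b) ∈ Set.range (Prod.map ![i, k] ![j, l]) := by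
    rwa [range_prodMap_vecCons]
  rw [blockIdeal_eq_comap_killCompl hik hjl, Ideal.mem_comap, ← hs, ← rename_X,
    killCompl_rename_app]
  exact X_notMem_span_permanent s

theorem two_notMem_blockIdeal (h2 : (2 : R) ≠ 0) (hik : i ≠ k) (hjl : j ≠ l) :
    2 ∉ blockIdeal R i k j l := by
  rw [blockIdeal_eq_comap_killCompl hik hjl, Ideal.mem_comap, map_ofNat]
  exact two_notMem_span_permanent h2

end Embedding

section Heights

variable [IsDomain R]

theorem isPrime_rowIdeal (i₀ : ι) : (rowIdeal (κ := κ) R i₀).IsPrime :=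
  rowIdeal_eq_span_X_image (R := R) i₀ ▸ isPrime_span_X_image _

theorem isPrime_columnIdeal (j₀ : κ) : (columnIdeal (ι := ι) R j₀).IsPrime :=
  columnIdeal_eq_span_X_image (R := R) j₀ ▸ isPrime_span_X_image _

theorem isPrime_blockIdeal [UniqueFactorizationMonoid R] {i k : ι} {j l : κ} (hik : i ≠ k)
    (hjl : j ≠ l) : (blockIdeal R i k j l).IsPrime := by
  have hperm := prime_permanent_mvPolynomialX_fin_two (R := R)
  have := (Ideal.span_singleton_prime hperm.ne_zero).2 hperm
  rw [blockIdeal_eq_comap_killCompl hik hjl]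
  infer_instance

variable [IsNoetherianRing R] [Fintype ι] [Fintype κ]

theorem height_rowIdeal (i₀ : ι) :
    (rowIdeal (κ := κ) R i₀).height = ((Fintype.card ι - 1) * Fintype.card κ : ℕ) := by
  rw [rowIdeal_eq_span_X_image, height_span_X_image, ← (Set.toFinite _).cast_ncard_eq,
    Set.ncard_prod, Set.ncard_compl]
  simp

theorem height_columnIdeal (j₀ : κ) :
    (columnIdeal (ι := ι) R j₀).height = (Fintype.card ι * (Fintype.card κ - 1) : ℕ) := by
  rw [columnIdeal_eq_span_X_image, height_span_X_image, ← (Set.toFinite _).cast_ncard_eq,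
    Set.ncard_prod, Set.ncard_compl]
  simp

theorem height_blockIdeal [UniqueFactorizationMonoid R] {i k : ι} {j l : κ} (hik : i ≠ k)
    (hjl : j ≠ l) :
    (blockIdeal R i k j l).height = (Fintype.card ι * Fintype.card κ - 3 : ℕ) := by
  have hinj := injective_prodMap_vecCons hik hjl
  have hcard : 4 ≤ Fintype.card ι * Fintype.card κ := by
    simpa using Fintype.card_le_of_injective _ hinj
  have hcompl : (Set.range (Prod.map ![i, k] ![j, l]))ᶜ.ncard + 1 =
      Fintype.card ι * Fintype.card κ - 3 := by
    have hrange : (Set.range (Prod.map ![i, k] ![j, l])).ncard = 4 := by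
      rw [Set.ncard_range_of_injective hinj]; simp
    rw [Set.ncard_compl, hrange, Nat.card_eq_fintype_card, Fintype.card_prod]
    omega
  rw [blockIdeal_eq_comap_killCompl hik hjl,
    height_comap_killCompl_span_singleton _ prime_permanent_mvPolynomialX_fin_two,
    ← (Set.toFinite _).cast_ncard_eq, ← hcompl, Nat.cast_add, Nat.cast_one]

end Heights

section Minimality

variable [LinearOrder ι] [LinearOrder κ]

theorem subpermanentIdeal_le_blockIdeal (i k : ι) (j l : κ) :
    subpermanentIdeal (mvPolynomialX ι κ R) ≤ blockIdeal R i k j l := by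
  have hX : ∀ a b, ¬ ((a = i ∨ a = k) ∧ (b = j ∨ b = l)) → X (a, b) ∈ blockIdeal R i k j l :=
    fun a b h => Ideal.subset_span (.inr ⟨a, b, h, rfl⟩)
  have hperm : X (i, j) * X (k, l) + X (k, j) * X (i, l) ∈ blockIdeal R i k j l :=
    Ideal.subset_span (.inl rfl)
  rw [subpermanentIdeal_le_iff]
  intro a b c d hab hcd
  by_cases h : ((a = i ∨ a = k) ∧ (b = i ∨ b = k)) ∧ ((c = j ∨ c = l) ∧ (d = j ∨ d = l))
  · have hsame : X (a, c) * X (b, d) + X (b, c) * X (a, d) =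
        (X (i, j) * X (k, l) + X (k, j) * X (i, l) : MvPolynomial (ι × κ) R) := by
      grind
    simpa only [mvPolynomialX_apply, hsame] using hperm
  · exact mul_add_mul_mem (by grind [mvPolynomialX_apply]) (by grind [mvPolynomialX_apply])

variable [IsDomain R]

theorem rowIdeal_mem_minimalPrimes (h2 : (2 : R) ≠ 0) (hκ : 3 ≤ ENat.card κ) (i₀ : ι) :
    rowIdeal R i₀ ∈ (subpermanentIdeal (mvPolynomialX ι κ R)).minimalPrimes := by
  refine ⟨⟨isPrime_rowIdeal i₀, subpermanentIdeal_le_of_mem_or_mem fun i k j l hik _ => ?_⟩, ?_⟩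
  · simp only [mvPolynomialX_apply, X_mem_rowIdeal]
    grind
  · rintro p ⟨hp, hM⟩ hle
    have hrow : ∀ j, mvPolynomialX ι κ R i₀ j ∉ p := fun j hj => X_mem_rowIdeal.1 (hle hj) rfl
    refine Ideal.span_le.2 ?_
    rintro _ ⟨i, j, hi, rfl⟩
    obtain ⟨j₁, hj₁, -⟩ := ENat.exists_ne_ne_of_three_le hκ j j
    obtain ⟨j₂, hj₂, hj₂₁⟩ := ENat.exists_ne_ne_of_three_le hκ j j₁
    exact entry_mem_of_row_notMem (fun h => two_notMem_rowIdeal h2 i₀ (hle h)) hM hi.symm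
      hj₂₁.symm hj₁.symm hj₂.symm (hrow j₁) (hrow j₂)

theorem columnIdeal_mem_minimalPrimes (h2 : (2 : R) ≠ 0) (hι : 3 ≤ ENat.card ι) (j₀ : κ) :
    columnIdeal R j₀ ∈ (subpermanentIdeal (mvPolynomialX ι κ R)).minimalPrimes := by
  refine ⟨⟨isPrime_columnIdeal j₀, subpermanentIdeal_le_of_mem_or_mem fun i k j l _ hjl => ?_⟩, ?_⟩
  · simp only [mvPolynomialX_apply, X_mem_columnIdeal]
    grind
  · rintro p ⟨hp, hM⟩ hle
    have hcol : ∀ i, mvPolynomialX ι κ R i j₀ ∉ p := fun i hi => X_mem_columnIdeal.1 (hle hi) rfl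
    refine Ideal.span_le.2 ?_
    rintro _ ⟨i, j, hj, rfl⟩
    obtain ⟨i₁, hi₁, -⟩ := ENat.exists_ne_ne_of_three_le hι i i
    obtain ⟨i₂, hi₂, hi₂₁⟩ := ENat.exists_ne_ne_of_three_le hι i i₁
    exact entry_mem_of_column_notMem (fun h => two_notMem_columnIdeal h2 j₀ (hle h)) hM hj.symm
      hi₂₁.symm hi₁.symm hi₂.symm (hcol i₁) (hcol i₂)

theorem blockIdeal_mem_minimalPrimes [UniqueFactorizationMonoid R] (h2 : (2 : R) ≠ 0) {i k : ι}
    {j l : κ} (hik : i ≠ k) (hjl : j ≠ l) :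
    blockIdeal R i k j l ∈ (subpermanentIdeal (mvPolynomialX ι κ R)).minimalPrimes := by
  refine ⟨⟨isPrime_blockIdeal hik hjl, subpermanentIdeal_le_blockIdeal i k j l⟩, ?_⟩
  rintro p ⟨hp, hM⟩ hle
  have hblock : ∀ a b, (a = i ∨ a = k) ∧ (b = j ∨ b = l) → mvPolynomialX ι κ R a b ∉ p :=
    fun a b hab h => X_notMem_blockIdeal hik hjl hab (hle h)
  refine Ideal.span_le.2 ?_
  rintro _ (rfl | ⟨a, b, hab, rfl⟩)
  · exact subpermanentIdeal_le_iff.1 hM hik hjl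
  · exact entry_mem_of_block_notMem (fun h => two_notMem_blockIdeal h2 hik hjl (hle h)) hM
      hik hjl hblock hab

theorem exists_mem_minimalPrimes_height_ne [UniqueFactorizationMonoid R] [IsNoetherianRing R]
    [Fintype ι] [Fintype κ] [Nontrivial ι] [Nontrivial κ] (h2 : (2 : R) ≠ 0)
    (hcard : 4 ≤ Fintype.card ι ∨ 4 ≤ Fintype.card κ) :
    ∃ P ∈ (subpermanentIdeal (mvPolynomialX ι κ R)).minimalPrimes,
      ∃ Q ∈ (subpermanentIdeal (mvPolynomialX ι κ R)).minimalPrimes, P.height ≠ Q.height := by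
  obtain ⟨i, k, hik⟩ := exists_pair_ne ι
  obtain ⟨j, l, hjl⟩ := exists_pair_ne κ
  have hι : 2 ≤ Fintype.card ι := Fintype.one_lt_card
  have hκ : 2 ≤ Fintype.card κ := Fintype.one_lt_card
  have hQ := blockIdeal_mem_minimalPrimes h2 hik hjl
  rcases hcard with hcard | hcard
  · refine ⟨_, columnIdeal_mem_minimalPrimes h2 ?_ j, _, hQ, ?_⟩
    · rw [ENat.card_eq_coe_fintype_card]
      exact_mod_cast (by omega : 3 ≤ Fintype.card ι)
    · rw [height_columnIdeal, height_blockIdeal hik hjl, Nat.mul_sub_one, Ne, Nat.cast_inj]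
      have := Nat.mul_le_mul_left (Fintype.card ι) hκ
      omega
  · refine ⟨_, rowIdeal_mem_minimalPrimes h2 ?_ i, _, hQ, ?_⟩
    · rw [ENat.card_eq_coe_fintype_card]
      exact_mod_cast (by omega : 3 ≤ Fintype.card κ)
    · rw [height_rowIdeal, height_blockIdeal hik hjl, Nat.sub_one_mul, Ne, Nat.cast_inj]
      have := Nat.mul_le_mul_right (Fintype.card κ) hι
      omega

end Minimality

end PrimesOfGenericMatrix

theorem exists_isPrime_orderHeight_eq {A : Type*} [CommRing A] {I : Ideal A} (hI : I.IsPrime)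
    {c : ℕ∞} (hc : I.height = c) :
    ∃ h : I.IsPrime, Order.height (⟨I, h⟩ : PrimeSpectrum A) = c :=
  ⟨hI, hc ▸ (PrimeSpectrum.height_eq_orderHeight ⟨I, hI⟩).symm⟩

theorem heights_of_minimal_primes_general {R : Type*} [CommRing R] [IsDomain R]
    [IsNoetherianRing R] [UniqueFactorizationMonoid R] (m n : ℕ) :
    (∀ i₀ : Fin m, ∃ h : (rowIdeal (κ := Fin n) R i₀).IsPrime,
      Order.height (⟨_, h⟩ : PrimeSpectrum (MvPolynomial (Fin m × Fin n) R)) =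
        ((m - 1) * n : ℕ)) ∧
    (∀ j₀ : Fin n, ∃ h : (columnIdeal (ι := Fin m) R j₀).IsPrime,
      Order.height (⟨_, h⟩ : PrimeSpectrum (MvPolynomial (Fin m × Fin n) R)) =
        (m * (n - 1) : ℕ)) ∧
    (∀ (i k : Fin m) (j l : Fin n), i < k → j < l → ∃ h : (blockIdeal R i k j l).IsPrime,
      Order.height (⟨_, h⟩ : PrimeSpectrum (MvPolynomial (Fin m × Fin n) R)) =
        (m * n - 3 : ℕ)) ∧
    ((2 : R) ≠ 0 → 2 ≤ m → 2 ≤ n → 4 ≤ m ∨ 4 ≤ n →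
      ∃ P Q : Ideal (MvPolynomial (Fin m × Fin n) R),
        P ∈ (subpermanentIdeal (mvPolynomialX (Fin m) (Fin n) R)).minimalPrimes ∧
        Q ∈ (subpermanentIdeal (mvPolynomialX (Fin m) (Fin n) R)).minimalPrimes ∧
        ∃ (hP : P.IsPrime) (hQ : Q.IsPrime),
          Order.height (⟨P, hP⟩ : PrimeSpectrum (MvPolynomial (Fin m × Fin n) R)) ≠
            Order.height (⟨Q, hQ⟩ : PrimeSpectrum (MvPolynomial (Fin m × Fin n) R))) := by
  have hrow (i₀ : Fin m) := exists_isPrime_orderHeight_eq (isPrime_rowIdeal i₀)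
    (height_rowIdeal (R := R) (κ := Fin n) i₀)
  have hcol (j₀ : Fin n) := exists_isPrime_orderHeight_eq (isPrime_columnIdeal j₀)
    (height_columnIdeal (R := R) (ι := Fin m) j₀)
  have hblock {i k : Fin m} {j l : Fin n} (hik : i ≠ k) (hjl : j ≠ l) :=
    exists_isPrime_orderHeight_eq (isPrime_blockIdeal hik hjl) (height_blockIdeal (R := R) hik hjl)
  simp only [Fintype.card_fin] at hrow hcol hblock
  refine ⟨hrow, hcol, fun i k j l hik hjl => hblock hik.ne hjl.ne, fun h2 hm hn hmn => ?_⟩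
  have := Fin.nontrivial_iff_two_le.2 hm
  have := Fin.nontrivial_iff_two_le.2 hn
  obtain ⟨P, hP, Q, hQ, hne⟩ :=
    exists_mem_minimalPrimes_height_ne (ι := Fin m) (κ := Fin n) h2 (by simpa using hmn)
  refine ⟨P, Q, hP, hQ, hP.1.1, hQ.1.1, ?_⟩
  rwa [← PrimeSpectrum.height_eq_orderHeight, ← PrimeSpectrum.height_eq_orderHeight]

/-- `R = F[x_{ij}]` is the polynomial ring in the entries of the generic m×n
matrix (m, n ≥ 3), char F ≠ 2, and `P₂(M)` is the ideal of 2×2 subpermanents.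
Type (1) primes (all entries outside one row) have height `(m-1)n`, type (2)
primes (all entries outside one column) have height `m(n-1)`, and type (3)
primes (one 2×2 subpermanent together with all entries outside its 2×2 block)
have height `mn - 3`.  Consequently, if `(m,n) ≠ (3,3)` there are minimal
primes of `P₂(M)` of different heights, so `R/P₂(M)` is not equidimensional. -/
theorem heights_of_minimal_primes (F : Type*) [Field F] (h2 : (2 : F) ≠ 0)
    (m n : ℕ) (hm : 3 ≤ m) (hn : 3 ≤ n) :
    (∀ i₀ : Fin m, ∃ h : (Ideal.span {f : MvPolynomial (Fin m × Fin n) F |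
        ∃ (i : Fin m) (j : Fin n), i ≠ i₀ ∧ f = X (i, j)}).IsPrime,
      Order.height (⟨_, h⟩ : PrimeSpectrum (MvPolynomial (Fin m × Fin n) F)) =
        ((m - 1) * n : ℕ)) ∧
    (∀ j₀ : Fin n, ∃ h : (Ideal.span {f : MvPolynomial (Fin m × Fin n) F |
        ∃ (i : Fin m) (j : Fin n), j ≠ j₀ ∧ f = X (i, j)}).IsPrime,
      Order.height (⟨_, h⟩ : PrimeSpectrum (MvPolynomial (Fin m × Fin n) F)) =
        (m * (n - 1) : ℕ)) ∧
    (∀ (i k : Fin m) (j l : Fin n), i < k → j < l →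
      ∃ h : (Ideal.span ({X (i, j) * X (k, l) + X (k, j) * X (i, l)} ∪
          {f : MvPolynomial (Fin m × Fin n) F |
            ∃ (p : Fin m) (q : Fin n),
              ¬ ((p = i ∨ p = k) ∧ (q = j ∨ q = l)) ∧ f = X (p, q)})).IsPrime,
      Order.height (⟨_, h⟩ : PrimeSpectrum (MvPolynomial (Fin m × Fin n) F)) =
        (m * n - 3 : ℕ)) ∧
    ((m, n) ≠ (3, 3) →
      ∃ P Q : Ideal (MvPolynomial (Fin m × Fin n) F),
        P ∈ (Ideal.span {f : MvPolynomial (Fin m × Fin n) F |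
          ∃ (i k : Fin m) (j l : Fin n), i < k ∧ j < l ∧
            f = X (i, j) * X (k, l) + X (k, j) * X (i, l)}).minimalPrimes ∧
        Q ∈ (Ideal.span {f : MvPolynomial (Fin m × Fin n) F |
          ∃ (i k : Fin m) (j l : Fin n), i < k ∧ j < l ∧
            f = X (i, j) * X (k, l) + X (k, j) * X (i, l)}).minimalPrimes ∧
        ∃ (hP : P.IsPrime) (hQ : Q.IsPrime),
          Order.height (⟨P, hP⟩ : PrimeSpectrum (MvPolynomial (Fin m × Fin n) F)) ≠
            Order.height (⟨Q, hQ⟩ : PrimeSpectrum (MvPolynomial (Fin m × Fin n) F))) := by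
  obtain ⟨hrow, hcol, hblock, hne⟩ := heights_of_minimal_primes_general (R := F) m n
  exact ⟨hrow, hcol, hblock, fun h => hne h2 (by omega) (by omega) (by grind)⟩
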